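/- arXiv:2407.14869 — 2 statements merged into one kernel-verified Lean document; each statement's English description precedes it below -/
import Mathlib

section
/- Let A ⊆ ℕ be a computable infinite set and B ⊆ ℕ an infinite set, and let α = Σ_{n∈A} 2^{−(n+1)} and β = Σ_{n∈B} 2^{−(n+1)} be the reals whose binary expansions are the characteristic functions of A and B respectively. If α is total-Solovay reducible to β, then B is not hyperimmune. -/
/-- The real `0.A` whose binary expansion is the characteristic function of `A ⊆ ℕ`,
i.e. `∑_{n ∈ A} 2^{-(n+1)}`. -/
noncomputable def binReal (A : Set ℕ) : ℝ :=
  ∑' n : ℕ, Set.indicator A (fun n => (2 : ℝ)⁻¹ ^ (n + 1)) n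

/-- An (infinite) set `B ⊆ ℕ` is hyperimmune if its principal function `p_B = Nat.nth (· ∈ B)`
is not majorized by any computable function. -/
def Hyperimmune (B : Set ℕ) : Prop :=
  ¬ ∃ g : ℕ → ℕ, Computable g ∧ ∀ n, Nat.nth (· ∈ B) n ≤ g n

/-- Total Solovay reducibility: `α ≤_S^tot β`. -/
def TotalSolovayReducible (α β : ℝ) : Prop :=
  ∃ c : ℚ, 0 < c ∧ ∃ f : ℚ → ℚ, Computable f ∧
    ∀ q : ℚ, (q : ℝ) < β → (f q : ℝ) < α ∧ α - (f q : ℝ) < (c : ℝ) * (β - (q : ℝ))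

/-!
A total Solovay reduction of `α` to `β` turns a computable positive lower bound on `α - q`, for
rationals `q < α`, into one on `β - q`, for rationals `q < β`. For `α = 0.A` computable, such a
bound exists. Apply the resulting bound on `β = 0.B` to the truncation `q` of `0.B` after position
`p_B(n)`: since the next digit `1` is at position `p_B(n + 1)`, one has `β - q ≤ 2 ^ (-p_B(n + 1))`,
so `p_B(n + 1)` is bounded computably in `q`. Although `q` itself is not computable from `n`, it is
one of finitely many dyadic rationals once `p_B(n)` is bounded, and maximizing over these bounds
`p_B` by recursion on `n`.
-/

open Denumerable Encodable Set

section Computability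

theorem primrec₂_nat_pow : Primrec₂ ((· ^ ·) : ℕ → ℕ → ℕ) :=
  Primrec₂.unpaired'.1 Nat.Primrec.pow

theorem computable_partialSups {v : ℕ → ℕ} (hv : Computable v) : Computable (partialSups v) := by
  have step : Computable₂ fun (_ : ℕ) (p : ℕ × ℕ) => max p.2 (v (p.1 + 1)) :=
    Primrec.nat_max.to_comp.comp (Computable.snd.comp .snd)
      (hv.comp (Computable.succ.comp (Computable.fst.comp .snd)))
  refine (Computable.nat_rec .id (.const (v 0)) step).of_eq fun n => ?_
  induction n with
  | zero => simp
  | succ n ih => simpa [partialSups_add_one] using congrArg (max · (v (n + 1))) ih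

theorem exists_computable_ge_of_succ_le {s G : ℕ → ℕ} (hG : Computable G) (hmono : Monotone G)
    (hs : ∀ n, s (n + 1) ≤ G (s n)) : ∃ g : ℕ → ℕ, Computable g ∧ ∀ n, s n ≤ g n := by
  refine ⟨fun n => n.rec (s 0) fun _ y => G y, ?_, fun n => ?_⟩
  · exact .nat_rec .id (.const (s 0)) (hG.comp (Computable.snd.comp .snd)).to₂
  · exact hmono.seq_le_seq n le_rfl (fun k _ => hs k) fun k _ => le_rfl

end Computability

section RatCodes

-- Mathlib numbers `ℚ` by the rank of the pair `(num, den)` among the codes of all such pairs; this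
-- rank is not explicit, but bounds on it suffice.

theorem eqv_ofEncodableOfInfinite_lt_iff {α : Type*} [Encodable α] [Infinite α] {x y : α} :
    @eqv α (ofEncodableOfInfinite α) x < @eqv α (ofEncodableOfInfinite α) y ↔
      encode x < encode y := by
  classical
  have eqv_eq_count (z : α) : @eqv α (ofEncodableOfInfinite α) z =
      Nat.count (· ∈ range (encode : α → ℕ)) (encode z) := by
    rw [Nat.count]
    change List.countP _ _ = _
    congr!
  rw [eqv_eq_count, eqv_eq_count]
  exact ⟨fun h => Nat.lt_of_count_lt_count h, Nat.count_strict_mono (mem_range_self x)⟩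

theorem eqv_rat_lt_iff {p q : ℚ} :
    eqv ℚ p < eqv ℚ q ↔ Nat.pair (encode p.num) p.den < Nat.pair (encode q.num) q.den :=
  eqv_ofEncodableOfInfinite_lt_iff

theorem eqv_rat_le_pair (q : ℚ) : eqv ℚ q ≤ Nat.pair (encode q.num) q.den := by
  let height (r : ℚ) : ℕ := Nat.pair (encode r.num) r.den
  have hmono : StrictMono fun e => height ((eqv ℚ).symm e) := fun d e hde =>
    eqv_rat_lt_iff.1 (by simpa using hde)
  simpa using hmono.le_apply (x := eqv ℚ q)

theorem encode_natCast_int (n : ℕ) : encode (n : ℤ) = 2 * n := rfl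

theorem eqv_rat_le_of_mem_Icc {q : ℚ} (hq : q ∈ Icc 0 1) : eqv ℚ q ≤ (2 * q.den + 1) ^ 2 := by
  have hnum : encode q.num ≤ 2 * q.den := by
    obtain ⟨n, hn⟩ := Int.eq_ofNat_of_zero_le (Rat.num_nonneg.2 hq.1)
    have := Rat.num_le_denom_iff.2 hq.2
    rw [hn, encode_natCast_int]
    omega
  calc eqv ℚ q ≤ Nat.pair (encode q.num) q.den := eqv_rat_le_pair q
    _ ≤ (max (encode q.num) q.den + 1) ^ 2 := (Nat.pair_lt_max_add_one_sq _ _).le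
    _ ≤ (2 * q.den + 1) ^ 2 := by gcongr; omega

theorem den_le_pair_eqv (q : ℚ) : q.den ≤ Nat.pair (2 * eqv ℚ q) 1 := by
  have hmono : StrictMono fun n : ℕ => eqv ℚ (n : ℚ) := fun m n hmn => by
    refine eqv_rat_lt_iff.2 ?_
    simpa [encode_natCast_int] using Nat.pair_lt_pair_left 1 (by omega : 2 * m < 2 * n)
  have hle : eqv ℚ q ≤ eqv ℚ (eqv ℚ q : ℚ) := hmono.le_apply
  calc q.den ≤ Nat.pair (encode q.num) q.den := Nat.right_le_pair _ _
    _ ≤ Nat.pair (encode (eqv ℚ q : ℚ).num) (eqv ℚ q : ℚ).den :=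
      not_lt.1 fun h => hle.not_gt (eqv_rat_lt_iff.2 h)
    _ = Nat.pair (2 * eqv ℚ q) 1 := by simp [encode_natCast_int]

end RatCodes

section BinaryExpansion

theorem summable_two_inv_pow_succ : Summable fun n : ℕ => (2 : ℝ)⁻¹ ^ (n + 1) :=
  (summable_nat_add_iff 1).2 (summable_geometric_of_lt_one (by norm_num) (by norm_num))

theorem binReal_nonneg (A : Set ℕ) : 0 ≤ binReal A :=
  tsum_nonneg fun _ => indicator_nonneg (fun _ _ => by positivity) _

theorem binReal_le_one (A : Set ℕ) : binReal A ≤ 1 := by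
  have hsum : ∑' n : ℕ, (2 : ℝ)⁻¹ ^ (n + 1) = 1 := by
    simp only [pow_succ, tsum_mul_right, tsum_geometric_inv_two]
    norm_num
  rw [← hsum]
  exact (summable_two_inv_pow_succ.indicator A).tsum_le_tsum
    (fun n => indicator_le_self' (fun _ _ => by positivity) n) summable_two_inv_pow_succ

theorem binReal_pos {A : Set ℕ} (hA : A.Nonempty) : 0 < binReal A := by
  obtain ⟨n, hn⟩ := hA
  refine (summable_two_inv_pow_succ.indicator A).tsum_pos
    (fun _ => indicator_nonneg (fun _ _ => by positivity) _) n ?_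
  rw [indicator_of_mem hn]
  positivity

open Classical in
theorem two_mul_binReal (A : Set ℕ) :
    2 * binReal A = (if 0 ∈ A then 1 else 0) + binReal {n | n + 1 ∈ A} := by
  have htail (n : ℕ) : 2 * A.indicator (fun n => (2 : ℝ)⁻¹ ^ (n + 1)) (n + 1) =
      indicator {n | n + 1 ∈ A} (fun n => 2⁻¹ ^ (n + 1)) n := by
    simp only [indicator_apply, mem_ofPred_eq, mul_ite, mul_zero]
    congr 1
    ring
  rw [binReal, (summable_two_inv_pow_succ.indicator A).tsum_eq_zero_add, mul_add, ← tsum_mul_left,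
    tsum_congr htail, binReal]
  simp [indicator_apply]

open Classical in
/-- The natural number whose binary digits, most significant first, are the first `k` digits of
`0.A`. It makes the computability of `A` available for arithmetic on `0.A`. -/
noncomputable def binPrefix (A : Set ℕ) : ℕ → ℕ
  | 0 => 0
  | k + 1 => 2 * binPrefix A k + if k ∈ A then 1 else 0

theorem computable_binPrefix {A : Set ℕ} (hA : ComputablePred (· ∈ A)) :
    Computable (binPrefix A) := by
  classical
  have bit : Computable fun k => if k ∈ A then 1 else 0 :=
    ComputablePred.ite (.const 1) (.const 0) hA
  have step : Computable₂ fun (_ : ℕ) (p : ℕ × ℕ) => 2 * p.2 + if p.1 ∈ A then 1 else 0 :=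
    Primrec.nat_add.to_comp.comp
      (Primrec.nat_mul.to_comp.comp (.const 2) (Computable.snd.comp .snd))
      (bit.comp (Computable.fst.comp .snd))
  refine (Computable.nat_rec .id (.const 0) step).of_eq fun n => ?_
  induction n with
  | zero => rfl
  | succ n ih => simp only [id_eq, binPrefix, ← ih]

theorem binPrefix_eq_zero {A : Set ℕ} {k : ℕ} (h : ∀ n < k, n ∉ A) : binPrefix A k = 0 := by
  induction k with
  | zero => rfl
  | succ k ih => simp [binPrefix, h k k.lt_succ_self, ih fun n hn => h n (hn.trans k.lt_succ_self)]

open Classical in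
theorem two_pow_mul_binReal (A : Set ℕ) (k : ℕ) :
    2 ^ k * binReal A = binPrefix A k + binReal {n | n + k ∈ A} := by
  induction k with
  | zero => simp [binPrefix]
  | succ k ih =>
    have hshift : 2 * binReal {n | n + k ∈ A} =
        (if k ∈ A then 1 else 0) + binReal {n | n + (k + 1) ∈ A} := by
      simpa [add_assoc, add_comm 1] using two_mul_binReal {n | n + k ∈ A}
    rw [pow_succ', mul_assoc, ih, mul_add, hshift, binPrefix]
    push_cast
    ring

theorem binReal_le_two_inv_pow {A : Set ℕ} {k : ℕ} (h : ∀ n < k, n ∉ A) :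
    binReal A ≤ 2⁻¹ ^ k := by
  have hk := two_pow_mul_binReal A k
  rw [binPrefix_eq_zero h, Nat.cast_zero, zero_add] at hk
  rw [inv_pow, ← one_div, le_div_iff₀' (by positivity), hk]
  exact binReal_le_one _

/-- The truncation of `0.A` to its first `k` binary digits, the rational at which the reduction
is queried. -/
noncomputable def binTrunc (A : Set ℕ) (k : ℕ) : ℚ := binPrefix A k / 2 ^ k

theorem binReal_sub_binTrunc (A : Set ℕ) (k : ℕ) :
    binReal A - binTrunc A k = 2⁻¹ ^ k * binReal {n | n + k ∈ A} := by
  rw [inv_pow, eq_inv_mul_iff_mul_eq₀ (by positivity), mul_sub, two_pow_mul_binReal, binTrunc]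
  push_cast
  rw [mul_div_cancel₀ _ (by positivity), add_sub_cancel_left]

theorem binTrunc_mem_Icc (A : Set ℕ) (k : ℕ) : binTrunc A k ∈ Icc 0 1 := by
  refine ⟨by unfold binTrunc; positivity, ?_⟩
  have hle : (binTrunc A k : ℝ) ≤ 1 := by
    refine (sub_nonneg.1 ?_).trans (binReal_le_one A)
    rw [binReal_sub_binTrunc]
    exact mul_nonneg (by positivity) (binReal_nonneg _)
  exact_mod_cast hle

theorem binTrunc_den_le (A : Set ℕ) (k : ℕ) : (binTrunc A k).den ≤ 2 ^ k := by
  have hdvd : ((binTrunc A k).den : ℤ) ∣ 2 ^ k := by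
    simpa [binTrunc, Rat.divInt_eq_div] using Rat.den_dvd (binPrefix A k) (2 ^ k)
  exact Nat.le_of_dvd (by positivity) (by exact_mod_cast hdvd)

theorem binTrunc_lt_binReal {A : Set ℕ} (hA : A.Infinite) (k : ℕ) :
    (binTrunc A k : ℝ) < binReal A := by
  obtain ⟨n, hn, hkn⟩ := hA.exists_gt k
  rw [← sub_pos, binReal_sub_binTrunc]
  exact mul_pos (by positivity) (binReal_pos ⟨n - k, by simpa [Nat.sub_add_cancel hkn.le]⟩)

theorem binReal_sub_binTrunc_le {A : Set ℕ} {k p : ℕ} (hgap : ∀ n, k ≤ n → n < p → n ∉ A) :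
    binReal A - binTrunc A k ≤ 2⁻¹ ^ p := by
  have htail : binReal {n | n + k ∈ A} ≤ 2⁻¹ ^ (p - k) :=
    binReal_le_two_inv_pow fun n hn => hgap (n + k) (by omega) (by omega)
  calc binReal A - binTrunc A k = 2⁻¹ ^ k * binReal {n | n + k ∈ A} := binReal_sub_binTrunc A k
    _ ≤ 2⁻¹ ^ k * 2⁻¹ ^ (p - k) := by gcongr
    _ = 2⁻¹ ^ (k + (p - k)) := (pow_add _ _ _).symm
    _ ≤ 2⁻¹ ^ p := pow_le_pow_of_le_one (by norm_num) (by norm_num) (by omega)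

end BinaryExpansion

section RationalApproximation

theorem two_inv_pow_le_inv {n : ℕ} (hn : n ≠ 0) : (2 : ℝ)⁻¹ ^ n ≤ (n : ℝ)⁻¹ := by
  rw [inv_pow]
  gcongr
  exact_mod_cast n.lt_two_pow_self.le

theorem inv_den_mul_den_le_sub {q r : ℚ} (h : q < r) :
    ((q.den * r.den : ℕ) : ℚ)⁻¹ ≤ r - q := by
  have hnum : q.num * r.den + 1 ≤ r.num * q.den := (Rat.lt_iff q r).1 h
  have hnum' : (q.num * r.den + 1 : ℚ) ≤ r.num * q.den := by exact_mod_cast hnum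
  have hsub : r - q = (r.num * q.den - q.num * r.den) / (q.den * r.den : ℕ) := by
    conv_lhs => rw [← Rat.num_div_den r, ← Rat.num_div_den q]
    push_cast
    field_simp
  rw [hsub, inv_eq_one_div]
  gcongr
  linarith

/-- For `d ≠ 0`, the interval `[d * x, d * x + d)` contains no multiple of `m`, expressed through a
remainder so as to be decidable by inspection. When `α` lies in `[x / m, (x + 1) / m]`, this
certifies that `d * α` is at distance at least `m⁻¹` from every integer below it. -/
def AvoidsMultiples (m d x : ℕ) : Prop :=
  0 < d * x % m ∧ d * x % m + d ≤ m

theorem computablePred_avoidsMultiples :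
    ComputablePred fun s : ℕ × ℕ × ℕ => AvoidsMultiples s.1 s.2.1 s.2.2 := by
  have hd : Primrec fun s : ℕ × ℕ × ℕ => s.2.1 := Primrec.fst.comp .snd
  have hmod : Primrec fun s : ℕ × ℕ × ℕ => s.2.1 * s.2.2 % s.1 :=
    Primrec.nat_mod.comp (Primrec.nat_mul.comp hd (Primrec.snd.comp .snd)) .fst
  exact ((Primrec.nat_lt.comp (.const 0) hmod).and
    (Primrec.nat_le.comp (Primrec.nat_add.comp hmod hd) .fst)).computablePred

theorem avoidsMultiples_of_lt_of_le {m d x t : ℕ} (hlt : t * m < d * x)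
    (hle : d * x + d ≤ (t + 1) * m) (hd : d ≠ 0) : AvoidsMultiples m d x := by
  have hdiv : d * x / m = t := Nat.div_eq_of_lt_le hlt.le (by omega)
  have hmod : t * m + d * x % m = d * x := hdiv ▸ Nat.div_add_mod' (d * x) m
  rw [add_one_mul] at hle
  exact ⟨by omega, by omega⟩

theorem AvoidsMultiples.inv_le_sub {m d x : ℕ} (h : AvoidsMultiples m d x) {α : ℝ}
    (hα : m * α ∈ Icc (x : ℝ) (x + 1)) {z : ℤ} (hz : z < d * α) : (m : ℝ)⁻¹ ≤ d * α - z := by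
  obtain ⟨hpos, hle⟩ := h
  have hm : (0 : ℝ) < m := Nat.cast_pos.2 (by omega)
  let t := d * x / m
  have hmod : t * m + d * x % m = d * x := Nat.div_add_mod' (d * x) m
  have hleft : (t * m + 1 : ℝ) ≤ d * x := by
    exact_mod_cast (by omega : t * m + 1 ≤ d * x)
  have hright : (d * x + d : ℝ) ≤ (t + 1) * m := by
    exact_mod_cast (by rw [add_one_mul]; omega : d * x + d ≤ (t + 1) * m)
  have hlower : (d * x : ℝ) ≤ d * (m * α) := by gcongr; exact hα.1
  have hupper : d * (m * α) ≤ d * (x + 1) := by gcongr; exact hα.2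
  have hzt : (z : ℝ) ≤ t := by
    have hlt : (z : ℝ) < t + 1 := hz.trans_le (le_of_mul_le_mul_right (by linarith) hm)
    exact_mod_cast Int.lt_add_one_iff.1 (by exact_mod_cast hlt : z < t + 1)
  calc (m : ℝ)⁻¹ ≤ d * α - t := by
        rw [inv_le_iff_one_le_mul₀ hm]
        linarith
    _ ≤ d * α - z := by gcongr

theorem exists_avoidsMultiples_two_pow {α : ℝ} (hα : Irrational α) {a : ℕ → ℕ}
    (ha : ∀ k, 2 ^ k * α ∈ Icc (a k : ℝ) (a k + 1)) {d : ℕ} (hd : d ≠ 0) :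
    ∃ k, AvoidsMultiples (2 ^ k) d (a k) := by
  have hα₀ : 0 ≤ α := by simpa using (Nat.cast_nonneg (a 0)).trans (ha 0).1
  let t := ⌊d * α⌋₊
  have hlt : t < d * α :=
    (Nat.floor_le (by positivity)).lt_of_ne ((hα.natCast_mul hd).ne_nat t).symm
  have hgt : d * α < t + 1 := Nat.lt_floor_add_one _
  obtain ⟨k, hk⟩ := pow_unbounded_of_one_lt (max (d / (d * α - t)) (d / (t + 1 - d * α))) one_lt_two
  obtain ⟨hklt, hkgt⟩ := max_lt_iff.1 hk
  rw [div_lt_iff₀ (sub_pos.2 ‹_›)] at hklt hkgt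
  have hlower : d * a k ≤ d * (2 ^ k * α) := by gcongr; exact (ha k).1
  have hupper : d * (2 ^ k * α) ≤ d * (a k + 1) := by gcongr; exact (ha k).2
  have hleft : (t * 2 ^ k : ℝ) < d * a k := by linarith
  have hright : (d * a k + d : ℝ) ≤ (t + 1) * 2 ^ k := by linarith
  exact ⟨k, avoidsMultiples_of_lt_of_le (by exact_mod_cast hleft) (by exact_mod_cast hright) hd⟩

end RationalApproximation

section Separation

/-- The distance from `α` to a rational `q < α` has a positive lower bound computable from `q`. This
is the property of `0.A` that the reduction passes on to `0.B`; besides the computable reals, every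
real that is not a Liouville number has it. The bound has the form `2⁻¹ ^ h q` so that `h` takes
values in `ℕ`. -/
def EffectivelySeparatedBelow (α : ℝ) : Prop :=
  ∃ h : ℚ → ℕ, Computable h ∧ ∀ q : ℚ, (q : ℝ) < α → 2⁻¹ ^ h q ≤ α - q

namespace EffectivelySeparatedBelow

variable {α : ℝ}

theorem of_den {H : ℕ → ℕ} (hH : Computable H)
    (hsep : ∀ q : ℚ, (q : ℝ) < α → 2⁻¹ ^ H q.den ≤ α - q) : EffectivelySeparatedBelow α := by
  refine ⟨fun q => partialSups H (Nat.pair (2 * eqv ℚ q) 1), ?_, fun q hq => ?_⟩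
  · have hpair : Primrec fun e : ℕ => Nat.pair (2 * e) 1 :=
      Primrec₂.natPair.comp (Primrec.nat_mul.comp (.const 2) .id) (.const 1)
    exact (computable_partialSups hH).comp (hpair.to_comp.comp .encode)
  · refine le_trans (pow_le_pow_of_le_one (by norm_num) (by norm_num) ?_) (hsep q hq)
    exact (le_partialSups H q.den).trans ((partialSups H).monotone (den_le_pair_eqv q))

theorem ratCast (r : ℚ) : EffectivelySeparatedBelow r := by
  refine of_den (H := (· * r.den)) (Primrec.nat_mul.comp .id (.const _)).to_comp fun q hq => ?_
  have hsub := inv_den_mul_den_le_sub (by exact_mod_cast hq : q < r)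
  refine (two_inv_pow_le_inv (mul_ne_zero q.den_ne_zero r.den_ne_zero)).trans ?_
  simpa using (Rat.cast_le (K := ℝ)).2 hsub

theorem of_irrational {a : ℕ → ℕ} (hα : Irrational α) (ha : Computable a)
    (happrox : ∀ k, 2 ^ k * α ∈ Icc (a k : ℝ) (a k + 1)) : EffectivelySeparatedBelow α := by
  classical
  have hex (d : ℕ) : ∃ k, AvoidsMultiples (2 ^ k) (d + 1) (a k) :=
    exists_avoidsMultiples_two_pow hα happrox d.succ_ne_zero
  have hfind : Computable fun d => Nat.find (hex d) :=
    .find (computablePred_avoidsMultiples.decide.comp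
      ((primrec₂_nat_pow.to_comp.comp (.const 2) .snd).pair
        ((Computable.succ.comp .fst).pair (ha.comp .snd)))).computablePred hex
  refine of_den (Primrec.nat_add.to_comp.comp (hfind.comp Computable.pred) .id) fun q hq => ?_
  let k := Nat.find (hex (q.den - 1))
  have hk : AvoidsMultiples (2 ^ k) (q.den - 1 + 1) (a k) := Nat.find_spec (hex (q.den - 1))
  rw [Nat.sub_add_cancel q.den_pos] at hk
  have hden : (0 : ℝ) < q.den := Nat.cast_pos.2 q.den_pos
  have hq_eq : (q : ℝ) = q.num / q.den := Rat.cast_def q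
  have hnum : (q.num : ℝ) < q.den * α := by rwa [hq_eq, div_lt_iff₀' hden] at hq
  have hdist : 2⁻¹ ^ k ≤ q.den * α - q.num := by
    simpa using hk.inv_le_sub (by exact_mod_cast happrox k) hnum
  calc (2 : ℝ)⁻¹ ^ (k + q.den) = 2⁻¹ ^ k * 2⁻¹ ^ q.den := pow_add _ _ _
    _ ≤ (q.den * α - q.num) * (q.den : ℝ)⁻¹ :=
      mul_le_mul hdist (two_inv_pow_le_inv q.den_ne_zero) (by positivity) (sub_pos.2 hnum).le
    _ = α - q := by rw [hq_eq]; field_simp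

theorem of_totalSolovayReducible {β : ℝ} (hα : EffectivelySeparatedBelow α)
    (hαβ : TotalSolovayReducible α β) : EffectivelySeparatedBelow β := by
  obtain ⟨h, hh, hsep⟩ := hα
  obtain ⟨c, -, f, hf, hred⟩ := hαβ
  obtain ⟨b, hb⟩ : ∃ b : ℕ, (c : ℝ) < 2 ^ b := pow_unbounded_of_one_lt _ one_lt_two
  refine ⟨fun q => b + h (f q), Primrec.nat_add.to_comp.comp (.const b) (hh.comp hf),
    fun q hq => ?_⟩
  obtain ⟨hlt, hdist⟩ := hred q hq
  have hβ : 2⁻¹ ^ h (f q) ≤ 2 ^ b * (β - q) :=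
    calc 2⁻¹ ^ h (f q) ≤ α - f q := hsep (f q) hlt
      _ ≤ c * (β - q) := hdist.le
      _ ≤ 2 ^ b * (β - q) := mul_le_mul_of_nonneg_right hb.le (sub_pos.2 hq).le
  calc (2 : ℝ)⁻¹ ^ (b + h (f q)) = (2 ^ b)⁻¹ * 2⁻¹ ^ h (f q) := by rw [pow_add, inv_pow]
    _ ≤ β - q := (inv_mul_le_iff₀ (by positivity)).2 hβ

theorem not_hyperimmune {B : Set ℕ} (hB : B.Infinite)
    (hsep : EffectivelySeparatedBelow (binReal B)) : ¬ Hyperimmune B := by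
  obtain ⟨h, hh, hsep⟩ := hsep
  let v := partialSups (h ∘ (eqv ℚ).symm)
  let G (x : ℕ) : ℕ := v ((2 * 2 ^ (x + 1) + 1) ^ 2)
  have hG : Computable G := by
    have hbound : Primrec fun x : ℕ => (2 * 2 ^ (x + 1) + 1) ^ 2 :=
      primrec₂_nat_pow.comp (Primrec.succ.comp (Primrec.nat_mul.comp (.const 2)
        (primrec₂_nat_pow.comp (.const 2) .succ))) (.const 2)
    exact (computable_partialSups (hh.comp (Computable.ofNat ℚ))).comp hbound.to_comp
  have hGmono : Monotone G := fun x y hxy => v.monotone (by gcongr; norm_num)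
  refine not_not_intro (exists_computable_ge_of_succ_le hG hGmono fun n => ?_)
  let k := Nat.nth (· ∈ B) n + 1
  let q := binTrunc B k
  have hgap (i : ℕ) (hki : k ≤ i) (hi : i < Nat.nth (· ∈ B) (n + 1)) : i ∉ B := fun hiB =>
    (Nat.le_nth_of_lt_nth_succ hi hiB).not_gt hki
  have hpow : (2 : ℝ)⁻¹ ^ h q ≤ 2⁻¹ ^ Nat.nth (· ∈ B) (n + 1) :=
    (hsep q (binTrunc_lt_binReal hB k)).trans (binReal_sub_binTrunc_le hgap)
  have hcode : eqv ℚ q ≤ (2 * 2 ^ k + 1) ^ 2 := by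
    refine (eqv_rat_le_of_mem_Icc (binTrunc_mem_Icc B k)).trans ?_
    gcongr
    exact binTrunc_den_le B k
  calc Nat.nth (· ∈ B) (n + 1) ≤ h q :=
      (pow_le_pow_iff_right_of_lt_one₀ (by norm_num) (by norm_num)).1 hpow
    _ ≤ v (eqv ℚ q) := by simpa using le_partialSups (h ∘ (eqv ℚ).symm) (eqv ℚ q)
    _ ≤ G (Nat.nth (· ∈ B) n) := v.monotone hcode

end EffectivelySeparatedBelow

-- The search for irrational `0.A` need not terminate for rational `0.A`, so the modulus is not
-- uniform in `A`.
theorem effectivelySeparatedBelow_binReal {A : Set ℕ} (hA : ComputablePred (· ∈ A)) :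
    EffectivelySeparatedBelow (binReal A) := by
  by_cases hirr : Irrational (binReal A)
  · refine .of_irrational hirr (computable_binPrefix hA) fun k => ?_
    rw [two_pow_mul_binReal]
    exact ⟨le_add_of_nonneg_right (binReal_nonneg _), add_le_add_right (binReal_le_one _) _⟩
  · obtain ⟨r, hr⟩ := not_not.1 hirr
    exact hr ▸ .ratCast r

end Separation

theorem not_hyperimmune_of_totalSolovay_general {α : ℝ} {B : Set ℕ}
    (hα : EffectivelySeparatedBelow α) (hB : B.Infinite)
    (h : TotalSolovayReducible α (binReal B)) : ¬ Hyperimmune B :=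
  (hα.of_totalSolovayReducible h).not_hyperimmune hB

theorem not_hyperimmune_of_totalSolovay (A B : Set ℕ)
    (hAcomp : ComputablePred (· ∈ A)) (hA : A.Infinite) (hB : B.Infinite)
    (h : TotalSolovayReducible (binReal A) (binReal B)) :
    ¬ Hyperimmune B :=
  not_hyperimmune_of_totalSolovay_general (effectivelySeparatedBelow_binReal hAcomp) hB h
end

section
/- There is no least element among the left-c.e. reals with respect to total Solovay reducibility; that is, there is no left-c.e. real γ such that γ is total-Solovay reducible to every left-c.e. real. -/
/-- A real is left-c.e. if some computable nondecreasing sequence of rationals converges to it. -/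
def LeftCE (α : ℝ) : Prop :=
  ∃ a : ℕ → ℚ, Computable a ∧ Monotone a ∧
    Filter.Tendsto (fun n => (a n : ℝ)) Filter.atTop (nhds α)

/-!
Total Solovay reducibility to a computable real `β` forces computability: good rational lower bounds
of `β` are sent to good rational lower bounds of `γ`. A computable real is moreover computably
separated from every other rational, by some distance `2^(-δ r)` at `r`.

On the other hand, a finite-injury construction of nested intervals gives a left-c.e. real `α` such
that every total computable precision demand `F` is met somewhere: `0 < α - q ≤ 2^(-F q)` for some
rational `q`. The `n`-th interval meets the `n`-th demand at the midpoint of its predecessor: the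
real stays in the left half until the demand at the midpoint is seen to converge, and then moves
just to the right of the midpoint.

If `f` reduced a computable `γ` to `α` with constant `c ≤ 2^k`, the demand `F q = δ (f q) + k` would
give a `q` with `γ - f q < c * (α - q) ≤ 2^(-δ (f q)) ≤ γ - f q`.
-/

open Filter Encodable

theorem primrecRel_coprime : PrimrecRel Nat.Coprime := by
  let CommonDivisorIsOne (d : ℕ) (p : ℕ × ℕ) : Prop := p.1 % d = 0 → p.2 % d = 0 → d = 1
  have isOne_primrec : PrimrecRel CommonDivisorIsOne := by
    have mod_ne {g : ℕ × ℕ → ℕ} (hg : Primrec g) :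
        PrimrecRel fun (d : ℕ) (p : ℕ × ℕ) => ¬ g p % d = 0 :=
      (Primrec.eq.comp (Primrec.nat_mod.comp (hg.comp .snd) .fst) (.const 0)).not
    exact ((mod_ne .fst).or ((mod_ne .snd).or (Primrec.eq.comp .fst (.const 1)))).of_eq
      fun _ => by simp only [CommonDivisorIsOne, imp_iff_not_or]
  have bound : Primrec fun p : ℕ × ℕ => p.1 + p.2 + 1 := Primrec.succ.comp Primrec.nat_add
  refine (isOne_primrec.forall_mem_list.comp (Primrec.list_range.comp bound) .id).of_eq
    fun ⟨m, n⟩ => ?_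
  simp only [List.mem_range, CommonDivisorIsOne, ← Nat.dvd_iff_mod_eq_zero, id]
  constructor
  · intro h
    refine h (m.gcd n) ?_ (m.gcd_dvd_left n) (m.gcd_dvd_right n)
    obtain rfl | n_pos := n.eq_zero_or_pos
    · simp
    · have := Nat.gcd_le_right m n_pos
      lia
  · exact fun h d _ hm hn => Nat.eq_one_of_dvd_coprimes h hm hn

theorem computable_coe_subtypeOfNat (s : Set ℕ) [DecidablePred (· ∈ s)] [Infinite s]
    (hs : ComputablePred (· ∈ s)) : Computable fun n => (Nat.Subtype.ofNat s n : ℕ) := by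
  let IsLater (m n : ℕ) : Prop := m < n ∧ n ∈ s
  have exists_later (m : ℕ) : ∃ n, IsLater m n :=
    let ⟨n, hn, hmn⟩ := (Set.infinite_coe_iff.1 ‹Infinite s›).exists_gt m
    ⟨n, hmn, hn⟩
  have next_computable : Computable fun m => Nat.find (exists_later m) := by
    refine Computable.find (Computable.computablePred ?_) exists_later
    exact (Primrec.and.to_comp.comp Primrec.nat_lt.decide.to_comp
      (hs.decide.comp Computable.snd)).of_eq fun p => by simp [IsLater]
  refine (Computable.nat_rec Computable.id (Computable.const (Nat.Subtype.ofNat s 0 : ℕ))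
    (next_computable.comp (Computable.snd.comp Computable.snd)).to₂).of_eq fun n => ?_
  induction n with
  | zero => rfl
  | succ n ih =>
    simp only [id] at ih ⊢
    rw [ih, Nat.find_eq_iff]
    refine ⟨⟨Nat.Subtype.lt_succ_self _, Subtype.property _⟩, fun m hm ⟨hlt, hms⟩ => ?_⟩
    have : Nat.Subtype.ofNat s (n + 1) ≤ ⟨m, hms⟩ := Nat.Subtype.succ_le_of_lt hlt
    exact hm.not_ge this

theorem computable_encode_ofEncodableOfInfinite (α : Type*) [E : Encodable α] [Infinite α]
    (h : ComputablePred (· ∈ Set.range E.encode)) :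
    Computable fun n =>
      E.encode (@Denumerable.ofNat α (Denumerable.ofEncodableOfInfinite α) n) := by
  let := decidableRangeEncode α
  have : Infinite (Set.range E.encode) :=
    Set.infinite_coe_iff.2 (Set.infinite_range_of_injective E.encode_injective)
  refine (computable_coe_subtypeOfNat _ h).of_eq fun n => ?_
  rw [Denumerable.ofEncodableOfInfinite, Denumerable.ofEquiv_ofNat]
  exact congrArg Subtype.val ((equivRangeEncode α).apply_symm_apply _).symm

theorem primrec_int_natAbs : Primrec Int.natAbs :=
  (Primrec.nat_div.comp (Primrec.succ.comp Primrec.encode) (.const 2)).of_eq fun z => by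
    cases z with
    | ofNat n => change (2 * n + 1) / 2 = n; lia
    | negSucc n => change (2 * n + 1 + 1) / 2 = n + 1; lia

theorem primrec_int_toNat : Primrec Int.toNat :=
  (Primrec.ite (Primrec.eq.comp (Primrec.nat_mod.comp Primrec.encode (.const 2)) (.const 0))
    (Primrec.nat_div.comp Primrec.encode (.const 2)) (.const 0)).of_eq fun z => by
      cases z with
      | ofNat n => change (if 2 * n % 2 = 0 then 2 * n / 2 else 0) = n; simp
      | negSucc n => change (if (2 * n + 1) % 2 = 0 then (2 * n + 1) / 2 else 0) = 0; simp

theorem primrec_int_neg_toNat : Primrec fun z : ℤ => (-z).toNat :=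
  (Primrec.nat_sub.comp primrec_int_natAbs primrec_int_toNat).of_eq fun z => by lia

theorem encode_rat (x : ℚ) : Rat.instEncodable.encode x = Nat.pair (encode x.num) x.den := rfl

theorem mem_range_encode_rat_iff (k : ℕ) :
    k ∈ Set.range Rat.instEncodable.encode ↔
      0 < k.unpair.2 ∧ (Denumerable.ofNat ℤ k.unpair.1).natAbs.Coprime k.unpair.2 := by
  constructor
  · rintro ⟨x, rfl⟩
    rw [encode_rat, Nat.unpair_pair, Denumerable.ofNat_encode]
    exact ⟨x.den_pos, x.reduced⟩
  · rintro ⟨pos, coprime⟩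
    exact ⟨⟨_, _, pos.ne', coprime⟩, by rw [encode_rat, Denumerable.encode_ofNat, Nat.pair_unpair]⟩

/-- `Computable` codes a rational by the position of `Nat.pair (encode num) den` in the range of
`Rat.instEncodable`, so reading off the two components takes an enumeration of that range. -/
theorem computable_pair_num_den : Computable fun x : ℚ => Nat.pair (encode x.num) x.den := by
  have den : Primrec fun k : ℕ => k.unpair.2 := Primrec.snd.comp .unpair
  have num_natAbs : Primrec fun k : ℕ => (Denumerable.ofNat ℤ k.unpair.1).natAbs :=
    primrec_int_natAbs.comp ((Primrec.ofNat ℤ).comp (Primrec.fst.comp .unpair))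
  have range_primrec : PrimrecPred (· ∈ Set.range Rat.instEncodable.encode) :=
    ((Primrec.nat_lt.comp (.const 0) den).and (primrecRel_coprime.comp num_natAbs den)).of_eq
      fun k => (mem_range_encode_rat_iff k).symm
  refine ((computable_encode_ofEncodableOfInfinite ℚ range_primrec.computablePred).comp
    Computable.encode).of_eq fun x => ?_
  exact congrArg _ (Denumerable.ofNat_encode x)

theorem computable_rat_num : Computable Rat.num :=
  Computable.encode_iff.1 <|
    (Computable.fst.comp (Computable.unpair.comp computable_pair_num_den)).of_eq fun x => by simp

theorem computable_rat_den : Computable Rat.den :=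
  (Computable.snd.comp (Computable.unpair.comp computable_pair_num_den)).of_eq fun x => by simp

theorem computable_of_computablePred_graph {α β : Type*} [Primcodable α] [Primcodable β]
    {g : α → β} (h : ComputablePred fun p : α × β => g p.1 = p.2) : Computable g := by
  classical
  let guess (a : α) (n : ℕ) : Option β :=
    (decode n).bind fun b => if g a = b then some b else none
  have guess_computable : Computable₂ guess := by
    refine Computable.option_bind (Computable.decode.comp Computable.snd) ?_
    refine (Computable.cond (h.decide.comp (.pair (.comp .fst .fst) .snd))
      (Computable.option_some.comp .snd) (.const none)).of_eq fun p => ?_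
    exact Bool.cond_decide ..
  refine (Partrec.rfindOpt guess_computable).of_eq_tot fun a => ?_
  have guess_encode : g a ∈ guess a (encode (g a)) := by simp [guess]
  obtain ⟨b, hb⟩ := Part.dom_iff_mem.1 (Nat.rfindOpt_dom.2 ⟨_, _, guess_encode⟩)
  obtain ⟨n, hn⟩ := Nat.rfindOpt_spec hb
  obtain ⟨_, -, h_guard⟩ := Option.bind_eq_some_iff.1 hn
  obtain ⟨rfl, h_eq⟩ := Option.ite_none_right_eq_some.1 h_guard
  rwa [Option.some.inj h_eq]

theorem rat_add_eq_iff (x y z : ℚ) : x + y = z ↔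
    x.num.toNat * (y.den * z.den) + y.num.toNat * (x.den * z.den)
        + (-z.num).toNat * (x.den * y.den) =
      (-x.num).toNat * (y.den * z.den) + (-y.num).toNat * (x.den * z.den)
        + z.num.toNat * (x.den * y.den) := by
  have cleared : x + y = z ↔
      x.num * (y.den * z.den) + y.num * (x.den * z.den) = z.num * (x.den * y.den : ℤ) := by
    conv_lhs => rw [← x.num_div_den, ← y.num_div_den, ← z.num_div_den]
    rw [div_add_div _ _ (by simp) (by simp), div_eq_div_iff (by simp) (by simp)]
    norm_cast
    push_cast
    ring_nf
  rw [cleared, ← Nat.cast_inj (R := ℤ)]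
  push_cast
  have split (w : ℤ) : w = w.toNat - (-w).toNat := w.toNat_sub_toNat_neg.symm
  constructor
  · intro h
    rw [split x.num, split y.num, split z.num] at h
    linear_combination h
  · intro h
    rw [split x.num, split y.num, split z.num]
    linear_combination h

/-- Computing the normal form of a sum is avoided: its graph is decidable by
cross-multiplication. -/
theorem computable_rat_add : Computable₂ fun x y : ℚ => x + y := by
  have mul := Primrec.nat_mul.to_comp
  have add := Primrec.nat_add.to_comp
  have pos := primrec_int_toNat.to_comp.comp computable_rat_num
  have neg := primrec_int_neg_toNat.to_comp.comp computable_rat_num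
  have hx : Computable fun p : (ℚ × ℚ) × ℚ => p.1.1 := .comp .fst .fst
  have hy : Computable fun p : (ℚ × ℚ) × ℚ => p.1.2 := .comp .snd .fst
  have hz : Computable fun p : (ℚ × ℚ) × ℚ => p.2 := .snd
  have den_mul {u v : (ℚ × ℚ) × ℚ → ℚ} (hu : Computable u) (hv : Computable v) :
      Computable fun p => (u p).den * (v p).den :=
    mul.comp (computable_rat_den.comp hu) (computable_rat_den.comp hv)
  refine computable_of_computablePred_graph (Computable.computablePred ?_)
  refine (Primrec.eq.decide.to_comp.comp
    (add.comp (add.comp (mul.comp (pos.comp hx) (den_mul hy hz))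
      (mul.comp (pos.comp hy) (den_mul hx hz))) (mul.comp (neg.comp hz) (den_mul hx hy)))
    (add.comp (add.comp (mul.comp (neg.comp hx) (den_mul hy hz))
      (mul.comp (neg.comp hy) (den_mul hx hz))) (mul.comp (pos.comp hz) (den_mul hx hy)))).of_eq
    fun p => ?_
  exact decide_eq_decide.2 (rat_add_eq_iff p.1.1 p.1.2 p.2).symm

theorem computable_rat_sub : Computable₂ fun x y : ℚ => x - y := by
  refine computable_of_computablePred_graph (Computable.computablePred ?_)
  refine (Primrec.eq.decide.to_comp.comp (computable_rat_add.comp Computable.snd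
    (Computable.snd.comp Computable.fst)) (Computable.fst.comp Computable.fst)).of_eq fun p => ?_
  exact decide_eq_decide.2 (eq_comm.trans sub_eq_iff_eq_add.symm)

theorem computable_rat_half : Computable fun x : ℚ => x / 2 := by
  refine computable_of_computablePred_graph (Computable.computablePred ?_)
  refine (Primrec.eq.decide.to_comp.comp (computable_rat_add.comp Computable.snd Computable.snd)
    Computable.fst).of_eq fun p => decide_eq_decide.2 ?_
  rw [div_eq_iff two_ne_zero, mul_two, eq_comm]

theorem computable_half_pow : Computable fun n : ℕ => (1 / 2 : ℚ) ^ n := by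
  refine (Computable.nat_rec Computable.id (Computable.const (1 : ℚ))
    (computable_rat_half.comp (Computable.snd.comp Computable.snd)).to₂).of_eq fun n => ?_
  induction n with
  | zero => exact (pow_zero _).symm
  | succ n ih =>
    simp only [id] at ih ⊢
    rw [ih, pow_succ, mul_one_div]

theorem computable_decide_rat_le : Computable₂ fun x y : ℚ => decide (x ≤ y) := by
  refine (Primrec.eq.decide.to_comp.comp (primrec_int_toNat.to_comp.comp
    (computable_rat_num.comp computable_rat_sub)) (Computable.const 0)).of_eq fun p => ?_
  rw [decide_eq_decide, Int.toNat_eq_zero, Rat.num_nonpos, sub_nonpos]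

/-- A real is computable if a computable sequence of rationals converges to it with error at most
`2⁻ⁿ` at index `n`. -/
def ComputableReal (x : ℝ) : Prop :=
  ∃ b : ℕ → ℚ, Computable b ∧ ∀ n, |x - b n| ≤ (1 / 2) ^ n

theorem computableReal_ratCast (q : ℚ) : ComputableReal q :=
  ⟨fun _ => q, Computable.const q, fun n => by simp⟩

theorem leftCE_ratCast (q : ℚ) : LeftCE q :=
  ⟨fun _ => q, Computable.const q, monotone_const, tendsto_const_nhds⟩

theorem mul_half_pow_add_le {c : ℝ} {k : ℕ} (hc : c ≤ 2 ^ k) (n : ℕ) :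
    c * (1 / 2) ^ (n + k) ≤ (1 / 2) ^ n :=
  calc c * (1 / 2) ^ (n + k) ≤ 2 ^ k * (1 / 2) ^ (n + k) := by gcongr
    _ = (1 / 2) ^ n := by rw [pow_add, one_div_pow (2 : ℝ) k]; field_simp

theorem ComputableReal.of_totalSolovayReducible {γ β : ℝ} (hβ : ComputableReal β)
    (h : TotalSolovayReducible γ β) : ComputableReal γ := by
  obtain ⟨b, hb, b_error⟩ := hβ
  obtain ⟨c, hc, f, hf, hfγ⟩ := h
  obtain ⟨k, hk⟩ := pow_unbounded_of_one_lt (2 * c : ℝ) one_lt_two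
  let q (n : ℕ) : ℚ := b (n + 1) - (1 / 2) ^ n
  have hq : Computable q :=
    computable_rat_sub.comp (hb.comp Computable.succ) computable_half_pow
  have shift : Computable fun n => n + k :=
    Primrec.nat_add.to_comp.comp Computable.id (Computable.const k)
  have q_approx (n : ℕ) : (q n : ℝ) < β ∧ β - q n ≤ 2 * (1 / 2) ^ n := by
    have hn := abs_le.1 (b_error (n + 1))
    have : (0 : ℝ) < (1 / 2) ^ n := by positivity
    rw [pow_succ] at hn
    constructor <;> push_cast [q] <;> linarith
  refine ⟨fun n => f (q (n + k)), hf.comp (hq.comp shift), fun n => ?_⟩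
  obtain ⟨q_lt, q_error⟩ := q_approx (n + k)
  obtain ⟨f_lt, f_error⟩ := hfγ _ q_lt
  rw [abs_of_pos (sub_pos.2 f_lt)]
  calc γ - f (q (n + k)) ≤ c * (β - q (n + k)) := f_error.le
    _ ≤ c * (2 * (1 / 2) ^ (n + k)) := by gcongr
    _ = 2 * c * (1 / 2) ^ (n + k) := by ring
    _ ≤ (1 / 2) ^ n := mul_half_pow_add_le hk.le n

/-- The decision procedure is not uniform in `x`: it depends on whether `x` is rational. -/
theorem computablePred_ratCast_eq (x : ℝ) : ComputablePred fun r : ℚ => (r : ℝ) = x := by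
  by_cases hx : ∃ g : ℚ, (g : ℝ) = x
  · obtain ⟨g, rfl⟩ := hx
    exact (Primrec.eq.comp Primrec.id (.const g)).computablePred.of_eq fun r => Rat.cast_inj.symm
  · push Not at hx
    exact Computable.computablePred ((Computable.const false).of_eq fun r => by simp [hx])

theorem half_pow_le_abs_ratCast_sub_iff (n : ℕ) (x y : ℚ) :
    (1 / 2 : ℝ) ^ n ≤ |(x : ℝ) - y| ↔ (1 / 2) ^ n ≤ x - y ∨ (1 / 2) ^ n ≤ y - x := by
  rw [le_abs, neg_sub, ← Rat.cast_le (K := ℝ), ← Rat.cast_le (K := ℝ)]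
  push_cast
  rfl

theorem ComputableReal.exists_computable_separation {x : ℝ} (hx : ComputableReal x) :
    ∃ δ : ℚ → ℕ, Computable δ ∧ ∀ r : ℚ, (r : ℝ) ≠ x → (1 / 2) ^ δ r ≤ |x - r| := by
  classical
  obtain ⟨b, hb, b_error⟩ := hx
  let Separated (r : ℚ) (n : ℕ) : Prop :=
    (r : ℝ) = x ∨ (1 / 2) ^ n ≤ b (n + 1) - r ∨ (1 / 2) ^ n ≤ r - b (n + 1)
  have separated_computable : ComputablePred fun p : ℚ × ℕ => Separated p.1 p.2 := by
    have hb' : Computable fun p : ℚ × ℕ => b (p.2 + 1) := hb.comp (Computable.succ.comp .snd)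
    have width : Computable fun p : ℚ × ℕ => (1 / 2 : ℚ) ^ p.2 := computable_half_pow.comp .snd
    refine Computable.computablePred ((Primrec.or.to_comp.comp
      ((computablePred_ratCast_eq x).decide.comp Computable.fst) (Primrec.or.to_comp.comp
        (computable_decide_rat_le.comp width (computable_rat_sub.comp hb' .fst))
        (computable_decide_rat_le.comp width (computable_rat_sub.comp .fst hb')))).of_eq
      fun p => ?_)
    simp [Separated]
  have exists_separated (r : ℚ) : ∃ n, Separated r n := by
    by_cases hr : (r : ℝ) = x
    · exact ⟨0, .inl hr⟩
    obtain ⟨n, hn⟩ :=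
      exists_pow_lt_of_lt_one (half_pos (abs_sub_pos.2 (Ne.symm hr))) one_half_lt_one
    have b_near := b_error (n + 1)
    have : (0 : ℝ) < (1 / 2) ^ n := by positivity
    rw [pow_succ] at b_near
    have width_le : (1 / 2 : ℝ) ^ n ≤ |(b (n + 1) : ℝ) - r| := by
      linarith [abs_sub_le x (b (n + 1)) r]
    exact ⟨n, .inr ((half_pow_le_abs_ratCast_sub_iff ..).1 width_le)⟩
  refine ⟨fun r => Nat.find (exists_separated r) + 1,
    Computable.succ.comp (Computable.find separated_computable exists_separated), fun r hr => ?_⟩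
  have separated := (Nat.find_spec (exists_separated r)).resolve_left hr
  set n := Nat.find (exists_separated r)
  have width_le : (1 / 2 : ℝ) ^ n ≤ |(b (n + 1) : ℝ) - r| :=
    (half_pow_le_abs_ratCast_sub_iff ..).2 separated
  have b_near := b_error (n + 1)
  rw [abs_sub_comm] at b_near
  rw [pow_succ] at b_near ⊢
  linarith [abs_sub_le (b (n + 1) : ℝ) x r]

/-- The pair `(l, k)` encodes the interval `[l, l + 2⁻ᵏ]`. -/
abbrev DyadicInterval := ℚ × ℕ

namespace DyadicInterval

/-- The left endpoint. -/
def left (I : DyadicInterval) : ℚ := I.1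

/-- The midpoint. -/
def mid (I : DyadicInterval) : ℚ := I.1 + (1 / 2) ^ (I.2 + 1)

/-- The right endpoint. -/
def right (I : DyadicInterval) : ℚ := I.1 + (1 / 2) ^ I.2

/-- The subinterval chosen according to the value of a partial function at the midpoint `m`: the
left half if it is undefined, and `[m + w, m + 2 * w]` with `2 * w ≤ 2⁻ᵗ` if it is `t`. -/
def refine (I : DyadicInterval) : Option ℕ → DyadicInterval
  | none => (I.left, I.2 + 1)
  | some t => (I.mid + (1 / 2) ^ (I.2 + t + 2), I.2 + t + 2)

variable (I : DyadicInterval)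

theorem left_lt_mid : I.left < I.mid := lt_add_of_pos_right _ (by positivity)

theorem left_le_right : I.left ≤ I.right := le_add_of_nonneg_right (by positivity)

theorem mid_add_half_pow : I.mid + (1 / 2) ^ (I.2 + 1) = I.right := by
  rw [mid, right, pow_succ]
  ring

theorem right_refine_none : (I.refine none).right = I.mid := rfl

theorem mid_lt_left_refine_some (t : ℕ) : I.mid < (I.refine (some t)).left :=
  lt_add_of_pos_right _ (by positivity)

theorem right_refine_some (t : ℕ) :
    (I.refine (some t)).right = I.mid + (1 / 2) ^ (I.2 + t + 1) := by
  change I.mid + (1 / 2) ^ (I.2 + t + 2) + (1 / 2) ^ (I.2 + t + 2) = _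
  ring

theorem right_refine_some_le_mid_add (t : ℕ) :
    (I.refine (some t)).right ≤ I.mid + (1 / 2) ^ t := by
  rw [right_refine_some]
  gcongr I.mid + ?_
  exact pow_le_pow_of_le_one (by norm_num) (by norm_num) (by lia)

theorem left_le_left_refine : ∀ o, I.left ≤ (I.refine o).left
  | none => le_rfl
  | some t => (I.left_lt_mid.trans (I.mid_lt_left_refine_some t)).le

theorem right_refine_le_right (o : Option ℕ) : (I.refine o).right ≤ I.right := by
  rw [← I.mid_add_half_pow]
  cases o with
  | none =>
    rw [right_refine_none]
    exact le_add_of_nonneg_right (by positivity)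
  | some t =>
    rw [right_refine_some]
    gcongr I.mid + ?_
    exact pow_le_pow_of_le_one (by norm_num) (by norm_num) (by lia)

theorem refine_eq_or_right_le_left {o o' : Option ℕ} (h : ∀ t ∈ o, t ∈ o') :
    I.refine o = I.refine o' ∨ (I.refine o).right ≤ (I.refine o').left := by
  match o, o', h with
  | none, none, _ => exact .inl rfl
  | none, some t, _ => exact .inr (I.mid_lt_left_refine_some t).le
  | some t, o', h => exact .inl (congrArg I.refine (h t rfl).symm)

theorem computable_mid : Computable mid :=
  computable_rat_add.comp Computable.fst (computable_half_pow.comp (Computable.succ.comp .snd))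

theorem computable_refine : Computable₂ refine := by
  have exponent : Computable fun p : (DyadicInterval × Option ℕ) × ℕ => p.1.1.2 + p.2 + 2 :=
    Primrec.nat_add.to_comp.comp
      (Primrec.nat_add.to_comp.comp (.comp .snd (.comp .fst .fst)) .snd) (.const 2)
  have some_case : Computable fun p : (DyadicInterval × Option ℕ) × ℕ => p.1.1.refine (some p.2) :=
    .pair (computable_rat_add.comp (computable_mid.comp (.comp .fst .fst))
      (computable_half_pow.comp exponent)) exponent
  have none_case : Computable fun p : DyadicInterval × Option ℕ => p.1.refine none :=
    .pair (.comp .fst .fst) (Computable.succ.comp (.comp .snd .fst))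
  exact (Computable.option_casesOn .snd none_case some_case.to₂).of_eq
    fun ⟨I, o⟩ => by cases o <;> rfl

end DyadicInterval

open Nat.Partrec (Code)

/-- The value at `q` of the `n`-th partial computable function on the rationals, if the computation
halts within `s` steps. The rationals are coded by `Denumerable.eqv`, as in `Computable`, and not by
the instance `Rat.instEncodable` that `encode q` would select. -/
def partialValue (s n : ℕ) (q : ℚ) : Option ℕ :=
  Code.evaln s (Denumerable.ofNat Code n) (Denumerable.eqv ℚ q)

theorem partialValue_mono {s s' n t : ℕ} {q : ℚ} (h : s ≤ s') (ht : t ∈ partialValue s n q) :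
    t ∈ partialValue s' n q :=
  Code.evaln_mono h ht

theorem eventually_partialValue_eq (n : ℕ) (q : ℚ) :
    ∃ o, ∀ᶠ s in atTop, partialValue s n q = o := by
  by_cases h : ∃ s t, t ∈ partialValue s n q
  · obtain ⟨s, t, ht⟩ := h
    exact ⟨some t, (eventually_ge_atTop s).mono fun s' hs' => partialValue_mono hs' ht⟩
  · push Not at h
    exact ⟨none, .of_forall fun s => Option.eq_none_iff_forall_not_mem.2 (h s)⟩

theorem exists_partialValue_index {F : ℚ → ℕ} (hF : Computable F) :
    ∃ n, ∀ q, ∀ᶠ s in atTop, partialValue s n q = some (F q) := by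
  obtain ⟨c, hc⟩ := Code.exists_code.1
    (Partrec.nat_iff.1 (hF.comp (Computable.ofNat ℚ)).partrec)
  refine ⟨encode c, fun q => ?_⟩
  have decode_code : Denumerable.ofNat ℚ (Denumerable.eqv ℚ q) = q :=
    (Denumerable.eqv ℚ).symm_apply_apply q
  have value : F q ∈ c.eval (Denumerable.eqv ℚ q) := by
    rw [hc, PFun.coe_val, decode_code]
    exact Part.mem_some _
  obtain ⟨s, hs⟩ := Code.evaln_complete.1 value
  exact (eventually_ge_atTop s).mono fun s' hs' =>
    partialValue_mono hs' (by rwa [partialValue, Denumerable.ofNat_encode])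

theorem computable_partialValue :
    Computable fun p : ℕ × ℕ × ℚ => partialValue p.1 p.2.1 p.2.2 :=
  Code.primrec_evaln.to_comp.comp
    (.pair (.pair .fst ((Computable.ofNat Code).comp (.comp .fst .snd)))
      (Computable.encode.comp (.comp .snd .snd)))

/-- The stage-`s` approximation of the nested intervals, the `n`-th of which has taken the first
`n` partial computable functions into account. -/
def approx (s : ℕ) : ℕ → DyadicInterval
  | 0 => (0, 0)
  | n + 1 => (approx s n).refine (partialValue s n (approx s n).mid)

theorem monotone_approx_left (s : ℕ) : Monotone fun n => (approx s n).left :=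
  monotone_nat_of_le_succ fun _ => DyadicInterval.left_le_left_refine _ _

theorem antitone_approx_right (s : ℕ) : Antitone fun n => (approx s n).right :=
  antitone_nat_of_succ_le fun _ => DyadicInterval.right_refine_le_right _ _

theorem approx_eq_or_right_le_left {s s' : ℕ} (h : s ≤ s') (n : ℕ) :
    approx s n = approx s' n ∨ (approx s n).right ≤ (approx s' n).left := by
  induction n with
  | zero => exact .inl rfl
  | succ n ih =>
    rcases ih with same | moved_right
    · rw [approx, approx, same]
      exact DyadicInterval.refine_eq_or_right_le_left _ fun _ => partialValue_mono h
    · exact .inr <| calc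
        (approx s (n + 1)).right ≤ (approx s n).right := antitone_approx_right s n.le_succ
        _ ≤ (approx s' n).left := moved_right
        _ ≤ (approx s' (n + 1)).left := monotone_approx_left s' n.le_succ

theorem monotone_approx_diagonal_left : Monotone fun s => (approx s s).left := by
  intro s s' h
  have stage_le : (approx s s).left ≤ (approx s' s).left := by
    rcases approx_eq_or_right_le_left h s with same | moved_right
    · rw [same]
    · exact (DyadicInterval.left_le_right _).trans moved_right
  exact stage_le.trans (monotone_approx_left s' h)

theorem computable_approx_diagonal_left : Computable fun s => (approx s s).left := by
  have index : Computable fun p : ℕ × ℕ × DyadicInterval => p.2.1 := .comp .fst .snd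
  have interval : Computable fun p : ℕ × ℕ × DyadicInterval => p.2.2 := .comp .snd .snd
  have query : Computable fun p : ℕ × ℕ × DyadicInterval => (p.1, p.2.1, p.2.2.mid) :=
    .pair .fst (index.pair (DyadicInterval.computable_mid.comp interval))
  have value := computable_partialValue.comp query
  have next : Computable₂ fun (s : ℕ) (p : ℕ × DyadicInterval) =>
      p.2.refine (partialValue s p.1 p.2.mid) :=
    DyadicInterval.computable_refine.comp interval value
  have rec_eq_approx (s n : ℕ) : Nat.rec (motive := fun _ => DyadicInterval) (0, 0)
      (fun m I => I.refine (partialValue s m I.mid)) n = approx s n := by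
    induction n with
    | zero => rfl
    | succ n ih => rw [approx, ← ih]
  have diagonal : Computable fun s => approx s s :=
    (Computable.nat_rec Computable.id (Computable.const (0, 0)) next).of_eq
      fun s => rec_eq_approx s s
  exact Computable.fst.comp diagonal

theorem eventually_approx_eq (n : ℕ) : ∃ I, ∀ᶠ s in atTop, approx s n = I := by
  induction n with
  | zero => exact ⟨_, .of_forall fun _ => rfl⟩
  | succ n ih =>
    obtain ⟨I, hI⟩ := ih
    obtain ⟨o, ho⟩ := eventually_partialValue_eq n I.mid
    exact ⟨I.refine o, by filter_upwards [hI, ho] with s hs hs'; rw [approx, hs, hs']⟩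

theorem exists_tendsto_approx_diagonal_left :
    ∃ α : ℝ, Tendsto (fun s => ((approx s s).left : ℝ)) atTop (nhds α) := by
  have monotone_left : Monotone fun s => ((approx s s).left : ℝ) :=
    Rat.cast_mono.comp monotone_approx_diagonal_left
  have left_le_one (s : ℕ) : (approx s s).left ≤ 1 := calc
    (approx s s).left ≤ (approx s s).right := DyadicInterval.left_le_right _
    _ ≤ (approx s 0).right := antitone_approx_right s s.zero_le
    _ = 1 := by rw [approx, DyadicInterval.right, zero_add, pow_zero]
  refine ⟨_, tendsto_atTop_ciSup monotone_left ⟨1, ?_⟩⟩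
  rintro _ ⟨s, rfl⟩
  have := Rat.cast_le (K := ℝ).2 (left_le_one s)
  rwa [Rat.cast_one] at this

theorem mem_Icc_of_eventually_approx_eq {α : ℝ} {n : ℕ} {I : DyadicInterval}
    (hα : Tendsto (fun s => ((approx s s).left : ℝ)) atTop (nhds α))
    (hI : ∀ᶠ s in atTop, approx s n = I) : α ∈ Set.Icc (I.left : ℝ) I.right := by
  constructor
  · refine ge_of_tendsto hα ?_
    filter_upwards [hI, eventually_ge_atTop n] with s hs hn
    exact Rat.cast_le.2 (hs ▸ monotone_approx_left s hn)
  · refine le_of_tendsto hα ?_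
    filter_upwards [hI, eventually_ge_atTop n] with s hs hn
    exact Rat.cast_le.2 ((DyadicInterval.left_le_right _).trans (hs ▸ antitone_approx_right s hn))

theorem exists_leftCE_forall_computable_exists_close :
    ∃ α : ℝ, LeftCE α ∧ ∀ F : ℚ → ℕ, Computable F →
      ∃ q : ℚ, (q : ℝ) < α ∧ α - q ≤ (1 / 2) ^ F q := by
  obtain ⟨α, hα⟩ := exists_tendsto_approx_diagonal_left
  refine ⟨α, ⟨_, computable_approx_diagonal_left, monotone_approx_diagonal_left, hα⟩,
    fun F hF => ?_⟩
  obtain ⟨n, hn⟩ := exists_partialValue_index hF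
  obtain ⟨I, hI⟩ := eventually_approx_eq n
  have next : ∀ᶠ s in atTop, approx s (n + 1) = I.refine (some (F I.mid)) := by
    filter_upwards [hI, hn I.mid] with s hs hs'
    rw [approx, hs, hs']
  obtain ⟨left_le, le_right⟩ := mem_Icc_of_eventually_approx_eq hα next
  refine ⟨I.mid, (Rat.cast_lt.2 (I.mid_lt_left_refine_some _)).trans_le left_le, ?_⟩
  have right_le := Rat.cast_le (K := ℝ).2 (I.right_refine_some_le_mid_add (F I.mid))
  push_cast at right_le
  linarith

theorem exists_leftCE_forall_computableReal_not_totalSolovayReducible :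
    ∃ α : ℝ, LeftCE α ∧ ∀ γ : ℝ, ComputableReal γ → ¬ TotalSolovayReducible γ α := by
  obtain ⟨α, hα, exists_close⟩ := exists_leftCE_forall_computable_exists_close
  refine ⟨α, hα, fun γ hγ => ?_⟩
  rintro ⟨c, hc, f, hf, hfγ⟩
  obtain ⟨δ, hδ, separation⟩ := hγ.exists_computable_separation
  obtain ⟨k, hk⟩ := pow_unbounded_of_one_lt (c : ℝ) one_lt_two
  obtain ⟨q, q_lt, q_close⟩ := exists_close (fun q => δ (f q) + k)
    (Primrec.nat_add.to_comp.comp (hδ.comp hf) (Computable.const k))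
  obtain ⟨f_lt, f_close⟩ := hfγ q q_lt
  refine lt_irrefl (γ - f q) ?_
  calc γ - f q < c * (α - q) := f_close
    _ ≤ c * (1 / 2) ^ (δ (f q) + k) := by gcongr
    _ ≤ (1 / 2) ^ δ (f q) := mul_half_pow_add_le hk.le _
    _ ≤ |γ - f q| := separation _ f_lt.ne
    _ = γ - f q := abs_of_pos (sub_pos.2 f_lt)

theorem no_least_totalSolovay_degree_general :
    ∃ α : ℝ, LeftCE α ∧ ∀ β γ : ℝ, ComputableReal β →
      TotalSolovayReducible γ β → ¬ TotalSolovayReducible γ α := by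
  obtain ⟨α, hα, not_reducible⟩ := exists_leftCE_forall_computableReal_not_totalSolovayReducible
  exact ⟨α, hα, fun β γ hβ hγβ => not_reducible γ (hβ.of_totalSolovayReducible hγβ)⟩

theorem no_least_totalSolovay_degree :
    ¬ ∃ γ : ℝ, LeftCE γ ∧ ∀ α : ℝ, LeftCE α → TotalSolovayReducible γ α := by
  rintro ⟨γ, -, reducible⟩
  obtain ⟨α, hα, no_lower_bound⟩ := no_least_totalSolovay_degree_general
  exact no_lower_bound _ γ (computableReal_ratCast 0) (reducible _ (leftCE_ratCast 0))
    (reducible α hα)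
end
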